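/- arXiv:1603.01078 — 2 statements merged into one kernel-verified Lean document; each statement's English description precedes it below -/
import Mathlib

section
/- Let S be the gluing of numerical semigroups S_1 and S_2 determined by p ∈ S_1 and q ∈ S_2, let s ∈ S_1, and let n = min{n ∈ ℕ : n·p ∉ AP(S_1,s)}. The following are equivalent: (1) AP(S, qs) is a homogeneous subset of S; (2) AP(S_1,s) is a homogeneous subset of S_1, AP(S_2, nq) is a homogeneous subset of S_2, and if n > 1 then ord_{S_1}(p) = ord_{S_2}(q). -/
open scoped BigOperators

/-- The value `Σ aᵢ nᵢ` of a tuple of coefficients `a` w.r.t. the generators `n`. -/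
def sval {d : ℕ} (n : Fin d → ℕ) (a : Fin d → ℕ) : ℕ := ∑ i, a i * n i

/-- The total length `Σ aᵢ` of a factorization. -/
def tlen {d : ℕ} (a : Fin d → ℕ) : ℕ := ∑ i, a i

/-- The submonoid of `ℕ` generated by `n`. -/
def gen {d : ℕ} (n : Fin d → ℕ) : Set ℕ := {s : ℕ | ∃ a : Fin d → ℕ, s = sval n a}

/-- The Apéry set of the semigroup generated by `n` with respect to `s`:
elements `x` of the semigroup such that `x - s` is not in the semigroup. -/
def Apery {d : ℕ} (n : Fin d → ℕ) (s : ℕ) : Set ℕ :=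
  {x : ℕ | x ∈ gen n ∧ ¬ ∃ y ∈ gen n, x = s + y}

/-- A subset `T` is homogeneous if every nonzero element of `T` has all its
factorizations of the same length. -/
def HomogSet {d : ℕ} (n : Fin d → ℕ) (T : Set ℕ) : Prop :=
  ∀ t ∈ T, t ≠ 0 → ∀ a b : Fin d → ℕ, sval n a = t → sval n b = t → tlen a = tlen b

/-- The order of `s`: the maximal length of a factorization of `s`. -/
noncomputable def ordS {d : ℕ} (n : Fin d → ℕ) (s : ℕ) : ℕ :=
  sSup {l : ℕ | ∃ a : Fin d → ℕ, sval n a = s ∧ tlen a = l}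

/-- The torsion set of the semigroup generated by `n`, with respect to the
generator of index `i0` (the smallest generator). -/
noncomputable def Torsion {d : ℕ} (n : Fin d → ℕ) (i0 : Fin d) : Set ℕ :=
  {s : ℕ | s ∈ gen n ∧ ∃ c : ℕ, 0 < c ∧ ordS n s + c < ordS n (s + c * n i0)}

/-- `n` is a minimal system of generators: any expression of a generator as a
nonnegative combination of the generators has total coefficient sum one. -/
def MinGen {d : ℕ} (n : Fin d → ℕ) : Prop :=
  ∀ r : Fin d, ∀ a : Fin d → ℕ, n r = sval n a → tlen a = 1

/-- `n` generates a numerical semigroup (cofinite in `ℕ`). -/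
def IsNumerical {d : ℕ} (n : Fin d → ℕ) : Prop := {x : ℕ | x ∉ gen n}.Finite

/-- The monomial `x^a = Π xᵢ^{aᵢ}`. -/
noncomputable def monom (k : Type*) [CommRing k] {d : ℕ} (a : Fin d → ℕ) :
    MvPolynomial (Fin d) k :=
  ∏ i, (MvPolynomial.X i : MvPolynomial (Fin d) k) ^ a i

/-- The toric ideal `I_S`: kernel of `k[x₁,…,x_d] → k[t]`, `xᵢ ↦ t^{nᵢ}`. -/
noncomputable def toricIdeal (k : Type*) [CommRing k] {d : ℕ} (n : Fin d → ℕ) :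
    Ideal (MvPolynomial (Fin d) k) :=
  RingHom.ker (MvPolynomial.aeval (R := k)
    (fun i => (Polynomial.X : Polynomial k) ^ n i)).toRingHom

/-- `E` is a minimal generating set of the ideal `I`: it spans `I` and no
proper subset spans `I`. -/
def IsMinGenSet {R : Type*} [CommRing R] (I : Ideal R) (E : Set R) : Prop :=
  Ideal.span E = I ∧ ∀ E' : Set R, E' ⊂ E → Ideal.span E' ≠ I

/-- Membership of an integer in the semigroup generated by `n`. -/
def memZ {d : ℕ} (n : Fin d → ℕ) (z : ℤ) : Prop := ∃ x ∈ gen n, (x : ℤ) = z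

/-- A numerical semigroup with Frobenius number `F = max (ℤ ∖ S)` is symmetric
if for every integer `z`, `z ∈ S ↔ F - z ∉ S`. -/
def IsSymmetric {d : ℕ} (n : Fin d → ℕ) : Prop :=
  ∃ F : ℤ, ¬ memZ n F ∧ (∀ z : ℤ, F < z → memZ n z) ∧
    ∀ z : ℤ, memZ n z ↔ ¬ memZ n (F - z)

/-- A numerical semigroup with Frobenius number `F = max (ℤ ∖ S)` is
pseudo-symmetric if `F` is even and for every integer `z`,
`z ∈ S ↔ (z ≠ F/2 ∧ F - z ∉ S)`. -/
def IsPseudoSymmetric {d : ℕ} (n : Fin d → ℕ) : Prop :=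
  ∃ F : ℤ, ¬ memZ n F ∧ (∀ z : ℤ, F < z → memZ n z) ∧ F % 2 = 0 ∧
    ∀ z : ℤ, memZ n z ↔ (z ≠ F / 2 ∧ ¬ memZ n (F - z))

/-- The generators `q·m₁,…,q·m_d, p·n₁,…,p·n_e` of the gluing of two numerical
semigroups. -/
def glueGen {d e : ℕ} (mg : Fin d → ℕ) (ng : Fin e → ℕ) (p q : ℕ) :
    Fin (d + e) → ℕ :=
  Fin.append (fun i => q * mg i) (fun i => p * ng i)
theorem sval_add' {d : ℕ} (n a b : Fin d → ℕ) : sval n (a + b) = sval n a + sval n b := by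
  simp [sval, add_mul, Finset.sum_add_distrib]

theorem sval_smul' {d : ℕ} (n : Fin d → ℕ) (k : ℕ) (a : Fin d → ℕ) :
    sval n (k • a) = k * sval n a := by
  simp [sval, Finset.mul_sum, mul_assoc]

theorem tlen_add' {d : ℕ} (a b : Fin d → ℕ) : tlen (a + b) = tlen a + tlen b := by
  simp [tlen, Finset.sum_add_distrib]

theorem tlen_smul' {d : ℕ} (k : ℕ) (a : Fin d → ℕ) : tlen (k • a) = k * tlen a := by
  simp [tlen, Finset.mul_sum]

theorem sval_zero' {d : ℕ} (n : Fin d → ℕ) : sval n 0 = 0 := by simp [sval]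

theorem tlen_zero' {d : ℕ} : tlen (0 : Fin d → ℕ) = 0 := by simp [tlen]

theorem gen_add' {d : ℕ} {n : Fin d → ℕ} {x y : ℕ} (hx : x ∈ gen n) (hy : y ∈ gen n) :
    x + y ∈ gen n := by
  obtain ⟨a, rfl⟩ := hx
  obtain ⟨b, rfl⟩ := hy
  exact ⟨a + b, (sval_add' n a b).symm⟩

theorem gen_mul' {d : ℕ} {n : Fin d → ℕ} (k : ℕ) {x : ℕ} (hx : x ∈ gen n) :
    k * x ∈ gen n := by
  obtain ⟨a, rfl⟩ := hx
  exact ⟨k • a, (sval_smul' n k a).symm⟩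

theorem apery_down {d : ℕ} {n : Fin d → ℕ} {s x y : ℕ} (hx : x ∈ gen n) (hy : y ∈ gen n)
    (h : x + y ∈ Apery n s) : x ∈ Apery n s := by
  refine ⟨hx, ?_⟩
  rintro ⟨z, hz, rfl⟩
  exact h.2 ⟨z + y, gen_add' hz hy, by ring⟩

theorem sval_eq_zero' {d : ℕ} {n : Fin d → ℕ} (hn : ∀ i, 0 < n i) {a : Fin d → ℕ}
    (h : sval n a = 0) : tlen a = 0 := by
  simp only [sval, tlen, Finset.sum_eq_zero_iff, Finset.mem_univ, true_implies] at *
  intro i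
  have := h i
  have h2 := hn i
  rcases Nat.mul_eq_zero.mp this with h3 | h3 <;> omega

theorem homog_all {d : ℕ} {n : Fin d → ℕ} (hn : ∀ i, 0 < n i) {T : Set ℕ}
    (hT : HomogSet n T) {a b : Fin d → ℕ} (ha : sval n a ∈ T) (hab : sval n a = sval n b) :
    tlen a = tlen b := by
  by_cases h0 : sval n a = 0
  · rw [sval_eq_zero' hn h0, sval_eq_zero' hn (hab ▸ h0)]
  · exact hT _ ha h0 a b rfl hab.symm

theorem ordS_eq' {d : ℕ} {n : Fin d → ℕ} {a : Fin d → ℕ}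
    (h : ∀ b, sval n b = sval n a → tlen b = tlen a) : ordS n (sval n a) = tlen a := by
  have : {l : ℕ | ∃ b : Fin d → ℕ, sval n b = sval n a ∧ tlen b = l} = {tlen a} := by
    ext l
    constructor
    · rintro ⟨b, hb, rfl⟩
      exact h b hb
    · rintro rfl
      exact ⟨a, rfl, rfl⟩
  rw [ordS, this, csSup_singleton]

theorem sval_append' {d e : ℕ} (mg : Fin d → ℕ) (ng : Fin e → ℕ) (p q : ℕ)
    (a : Fin d → ℕ) (b : Fin e → ℕ) :
    sval (glueGen mg ng p q) (Fin.append a b) = q * sval mg a + p * sval ng b := by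
  simp only [sval, glueGen, Fin.sum_univ_add, Fin.append_left, Fin.append_right, Finset.mul_sum]
  congr 1 <;> exact Finset.sum_congr rfl fun i _ => by ring

theorem tlen_append' {d e : ℕ} (a : Fin d → ℕ) (b : Fin e → ℕ) :
    tlen (Fin.append a b) = tlen a + tlen b := by
  simp [tlen, Fin.sum_univ_add]

theorem exists_append' {d e : ℕ} (c : Fin (d + e) → ℕ) :
    ∃ (a : Fin d → ℕ) (b : Fin e → ℕ), c = Fin.append a b :=
  ⟨fun i => c (Fin.castAdd e i), fun i => c (Fin.natAdd d i), Fin.append_castAdd_natAdd.symm⟩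

theorem gen_glue' {d e : ℕ} {mg : Fin d → ℕ} {ng : Fin e → ℕ} {p q x : ℕ} :
    x ∈ gen (glueGen mg ng p q) ↔ ∃ a ∈ gen mg, ∃ b ∈ gen ng, x = q * a + p * b := by
  constructor
  · rintro ⟨c, rfl⟩
    obtain ⟨a, b, rfl⟩ := exists_append' c
    exact ⟨_, ⟨a, rfl⟩, _, ⟨b, rfl⟩, sval_append' ..⟩
  · rintro ⟨_, ⟨a, rfl⟩, _, ⟨b, rfl⟩, rfl⟩
    exact ⟨Fin.append a b, (sval_append' ..).symm⟩

/-- Comparing two decompositions. -/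
theorem glue_arith {p q a b a' b' : ℕ} (hp0 : 0 < p) (hq0 : 0 < q) (hcop : Nat.Coprime p q)
    (hle : a ≤ a') (h : q * a + p * b = q * a' + p * b') :
    ∃ k, a' = a + k * p ∧ b = b' + k * q := by
  obtain ⟨t, rfl⟩ := Nat.exists_eq_add_of_le hle
  have h1 : p * b = q * t + p * b' := by linarith [mul_add q a t]
  have h2 : p ∣ q * t := (Nat.dvd_add_iff_left (Dvd.intro b' rfl)).mpr ⟨b, h1.symm⟩
  obtain ⟨k, rfl⟩ := hcop.dvd_of_dvd_mul_left h2
  refine ⟨k, by ring, ?_⟩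
  apply Nat.eq_of_mul_eq_mul_left hp0
  rw [h1]; ring

theorem glue_key {d e : ℕ} {mg : Fin d → ℕ} {ng : Fin e → ℕ}
    (hmp : ∀ i, 0 < mg i) (hnp : ∀ i, 0 < ng i)
    {p q : ℕ} (hp : p ∈ gen mg) (hq : q ∈ gen ng)
    (hp0 : 0 < p) (hq0 : 0 < q) (hcop : Nat.Coprime p q) {s n : ℕ}
    (hn : n * p ∉ Apery mg s)
    (h1 : HomogSet mg (Apery mg s)) (h2 : HomogSet ng (Apery ng (n * q)))
    (h3 : 1 < n → ordS mg p = ordS ng q)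
    {a a' : Fin d → ℕ} {b b' : Fin e → ℕ} (hle : sval mg a ≤ sval mg a')
    (hx : q * sval mg a + p * sval ng b ∈ Apery (glueGen mg ng p q) (q * s))
    (h : q * sval mg a + p * sval ng b = q * sval mg a' + p * sval ng b') :
    tlen a + tlen b = tlen a' + tlen b' := by
  have hnp' : ∃ y ∈ gen mg, n * p = s + y := by
    by_contra hc
    exact hn ⟨gen_mul' n hp, hc⟩
  obtain ⟨y, hy, hyn⟩ := hnp'
  obtain ⟨k, hk1, hk2⟩ := glue_arith hp0 hq0 hcop hle h
  have ha' : sval mg a' ∈ Apery mg s := by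
    refine ⟨⟨a', rfl⟩, ?_⟩
    rintro ⟨z, hz, hz2⟩
    refine hx.2 ⟨q * z + p * sval ng b', gen_glue'.2 ⟨z, hz, _, ⟨b', rfl⟩, rfl⟩, ?_⟩
    rw [h, hz2]; ring
  have hb : sval ng b ∈ Apery ng (n * q) := by
    refine ⟨⟨b, rfl⟩, ?_⟩
    rintro ⟨z, hz, hz2⟩
    refine hx.2 ⟨q * (sval mg a + y) + p * z,
      gen_glue'.2 ⟨_, gen_add' ⟨a, rfl⟩ hy, _, hz, rfl⟩, ?_⟩
    have : p * (n * q) = q * (s + y) := by rw [← hyn]; ring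
    rw [hz2, mul_add p, this]; ring
  obtain ⟨P, hP⟩ := hp
  obtain ⟨Q, hQ⟩ := hq
  have e1 : sval mg a' = sval mg (a + k • P) := by rw [sval_add', sval_smul', hk1, hP]
  have e2 : sval ng b = sval ng (b' + k • Q) := by rw [sval_add', sval_smul', hk2, hQ]
  have t1 := homog_all hmp h1 ha' e1
  have t2 := homog_all hnp h2 hb e2
  rw [tlen_add', tlen_smul'] at t1 t2
  rcases Nat.eq_zero_or_pos k with rfl | hk
  · simp at t1 t2; omega
  obtain ⟨j, rfl⟩ := Nat.exists_eq_add_of_lt hk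
  have pA : p ∈ Apery mg s := by
    refine apery_down (y := sval mg (a + j • P)) ⟨P, hP⟩ ⟨_, rfl⟩ ?_
    convert ha' using 1
    rw [e1]; simp only [sval_add', sval_smul', ← hP]; ring
  have qA : q ∈ Apery ng (n * q) := by
    refine apery_down (y := sval ng (b' + j • Q)) ⟨Q, hQ⟩ ⟨_, rfl⟩ ?_
    convert hb using 1
    rw [e2]; simp only [sval_add', sval_smul', ← hQ]; ring
  have hn1 : 1 < n := by
    by_contra hc
    have : n = 0 ∨ n = 1 := by omega
    rcases this with rfl | rfl
    · exact qA.2 ⟨q, ⟨Q, hQ⟩, by ring⟩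
    · exact hn (by simpa using pA)
  have := h3 hn1
  have o1 : ordS mg p = tlen P := by
    rw [hP]; exact ordS_eq' fun c hc => (homog_all hmp h1 (hP ▸ pA) hc.symm).symm
  have o2 : ordS ng q = tlen Q := by
    rw [hQ]; exact ordS_eq' fun c hc => (homog_all hnp h2 (hQ ▸ qA) hc.symm).symm
  rw [← o1] at t1
  rw [← o2, ← this] at t2
  omega

/-- with `n = min {n : n·p ∉ AP(S₁,s)}`, the Apéry set
`AP(S, q·s)` of the gluing is homogeneous iff `AP(S₁,s)` and `AP(S₂, n·q)`
are homogeneous and, when `n > 1`, `ord_{S₁}(p) = ord_{S₂}(q)`. -/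
theorem statement15
    {d e : ℕ} (hd : 0 < d) (he : 0 < e)
    (mg : Fin d → ℕ) (ng : Fin e → ℕ)
    (hmmono : StrictMono mg) (hnmono : StrictMono ng)
    (hmpos : 0 < mg ⟨0, hd⟩) (hnpos : 0 < ng ⟨0, he⟩)
    (hmnum : IsNumerical mg) (hnnum : IsNumerical ng)
    (hmmin : MinGen mg) (hnmin : MinGen ng)
    (p q : ℕ) (hp : p ∈ gen mg) (hq : q ∈ gen ng)
    (hp0 : 0 < p) (hq0 : 0 < q) (hcop : Nat.Coprime p q)
    (hpn : p ∉ Set.range mg) (hqn : q ∉ Set.range ng)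
    (s : ℕ) (hs : s ∈ gen mg) :
    HomogSet (glueGen mg ng p q) (Apery (glueGen mg ng p q) (q * s)) ↔
      (HomogSet mg (Apery mg s) ∧
        HomogSet ng (Apery ng (sInf {t : ℕ | t * p ∉ Apery mg s} * q)) ∧
        (1 < sInf {t : ℕ | t * p ∉ Apery mg s} →
          ordS mg p = ordS ng q)) := by
  have hmp : ∀ i, 0 < mg i := fun i =>
    lt_of_lt_of_le hmpos (hmmono.monotone (Fin.mk_le_of_le_val (Nat.zero_le _)))
  have hnp : ∀ i, 0 < ng i := fun i =>
    lt_of_lt_of_le hnpos (hnmono.monotone (Fin.mk_le_of_le_val (Nat.zero_le _)))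
  have hne : {t : ℕ | t * p ∉ Apery mg s}.Nonempty := by
    obtain ⟨N, hN⟩ := hmnum.bddAbove
    refine ⟨s + N + 1, fun hA => hA.2 ⟨(s + N + 1) * p - s, ?_, ?_⟩⟩
    · by_contra hc
      have h1 := hN hc
      have h2 : s + N + 1 ≤ (s + N + 1) * p := Nat.le_mul_of_pos_right _ hp0
      omega
    · have h2 : s + N + 1 ≤ (s + N + 1) * p := Nat.le_mul_of_pos_right _ hp0
      omega
  have hn : sInf {t : ℕ | t * p ∉ Apery mg s} * p ∉ Apery mg s := Nat.sInf_mem hne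
  have hmin : ∀ t, t * p ∉ Apery mg s → sInf {t : ℕ | t * p ∉ Apery mg s} ≤ t :=
    fun t ht => Nat.sInf_le ht
  generalize sInf {t : ℕ | t * p ∉ Apery mg s} = n at *
  constructor
  · intro H
    have L1 : ∀ x ∈ Apery mg s, q * x ∈ Apery (glueGen mg ng p q) (q * s) := by
      rintro x ⟨hx, hx2⟩
      refine ⟨gen_glue'.2 ⟨x, hx, 0, ⟨0, (sval_zero' _).symm⟩, by simp⟩, ?_⟩
      rintro ⟨z, hz, hz2⟩
      obtain ⟨a, ha, b, hb, rfl⟩ := gen_glue'.1 hz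
      have hz3 : q * (s + a) + p * b = q * x + p * 0 := by rw [hz2]; ring
      have hle : s + a ≤ x := by
        apply Nat.le_of_mul_le_mul_left _ hq0
        have := Nat.zero_le (p * b)
        omega
      obtain ⟨k, hk, -⟩ := glue_arith hp0 hq0 hcop hle hz3
      exact hx2 ⟨a + k * p, gen_add' ha (gen_mul' k hp), by rw [hk]; ring⟩
    have L2 : ∀ x ∈ Apery ng (n * q), p * x ∈ Apery (glueGen mg ng p q) (q * s) := by
      rintro x ⟨hx, hx2⟩
      refine ⟨gen_glue'.2 ⟨0, ⟨0, (sval_zero' _).symm⟩, x, hx, by simp⟩, ?_⟩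
      rintro ⟨z, hz, hz2⟩
      obtain ⟨a, ha, b, hb, rfl⟩ := gen_glue'.1 hz
      have hz3 : q * 0 + p * x = q * (s + a) + p * b := by rw [hz2]; ring
      obtain ⟨k, hk, hk2⟩ := glue_arith hp0 hq0 hcop (Nat.zero_le _) hz3
      have hnk : n ≤ k := hmin k fun hA => hA.2 ⟨a, ha, by omega⟩
      obtain ⟨j, rfl⟩ := Nat.exists_eq_add_of_le hnk
      exact hx2 ⟨b + j * q, gen_add' hb (gen_mul' j hq), by rw [hk2]; ring⟩
    refine ⟨?_, ?_, ?_⟩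
    · intro t ht ht0 a b ha hb
      have := H _ (L1 t ht) (Nat.mul_ne_zero hq0.ne' ht0) (Fin.append a 0) (Fin.append b 0)
        (by rw [sval_append', ha, sval_zero']; simp) (by rw [sval_append', hb, sval_zero']; simp)
      simpa [tlen_append', tlen_zero'] using this
    · intro t ht ht0 a b ha hb
      have := H _ (L2 t ht) (Nat.mul_ne_zero hp0.ne' ht0) (Fin.append 0 a) (Fin.append 0 b)
        (by rw [sval_append', ha, sval_zero']; simp) (by rw [sval_append', hb, sval_zero']; simp)
      simpa [tlen_append', tlen_zero'] using this
    · intro hn1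
      have pA : p ∈ Apery mg s := by
        by_contra hc
        have := hmin 1 (by simpa using hc)
        omega
      have key : ∀ (P : Fin d → ℕ) (Q : Fin e → ℕ), sval mg P = p → sval ng Q = q →
          tlen P = tlen Q := by
        intro P Q hP hQ
        have := H _ (L1 p pA) (Nat.mul_ne_zero hq0.ne' hp0.ne') (Fin.append P 0) (Fin.append 0 Q)
          (by rw [sval_append', hP, sval_zero']; simp)
          (by rw [sval_append', hQ, sval_zero']; simp [mul_comm])
        simpa [tlen_append', tlen_zero'] using this
      obtain ⟨P, hP⟩ := hp
      obtain ⟨Q, hQ⟩ := hq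
      have o1 : ordS mg p = tlen P := by
        rw [hP]
        exact ordS_eq' fun c hc =>
          (key c Q (hc.trans hP.symm) hQ.symm).trans (key P Q hP.symm hQ.symm).symm
      have o2 : ordS ng q = tlen Q := by
        rw [hQ]
        exact ordS_eq' fun c hc =>
          (key P c hP.symm (hc.trans hQ.symm)).symm.trans (key P Q hP.symm hQ.symm)
      rw [o1, o2, key P Q hP.symm hQ.symm]
  · rintro ⟨h1, h2, h3⟩ t ht - c c' hc hc'
    obtain ⟨a, b, rfl⟩ := exists_append' c
    obtain ⟨a', b', rfl⟩ := exists_append' c'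
    rw [sval_append'] at hc hc'
    rw [tlen_append', tlen_append']
    rcases le_total (sval mg a) (sval mg a') with hle | hle
    · exact glue_key hmp hnp hp hq hp0 hq0 hcop hn h1 h2 h3 hle (hc ▸ ht) (hc.trans hc'.symm)
    · exact (glue_key hmp hnp hp hq hp0 hq0 hcop hn h1 h2 h3 hle (hc' ▸ ht)
        (hc'.trans hc.symm)).symm
end

section
/- Let S be a numerical semigroup minimally generated by n_1 < … < n_d, set m_i = n_d − n_i for 1 ≤ i ≤ d−1, g = gcd(m_1,…,m_{d−1}), let c be the conductor of T = ⟨m_1/g,…,m_{d−1}/g⟩ and L = m_1·m_2·((g·c + d·m_1)/m_{d−1} + d) − n_d. Let j > L be an integer and let s be an element of the shifted semigroup S+j = ⟨n_1+j,…,n_d+j⟩. If a and a' are factorizations of s with respect to the generators n_1+j,…,n_d+j with |a| > |a'|, then there exists a factorization b of s with |b| = |a| and b_1 ≠ 0. -/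
open scoped BigOperators

/-- for `j > L`, any factorization in `S+j` of non-maximal
length can be matched by a factorization of the larger length whose first
coordinate is nonzero. -/
theorem statement18
    {d : ℕ} (hd : 2 ≤ d) (n : Fin d → ℕ)
    (hmono : StrictMono n) (hpos : 0 < n ⟨0, by omega⟩)
    (hnum : IsNumerical n) (hmin : MinGen n)
    (g c : ℕ)
    (hg : g = (Finset.univ.filter (fun i : Fin d => (i : ℕ) < d - 1)).gcd
      (fun i => n ⟨d - 1, by omega⟩ - n i))
    (hc : c = sInf {c' : ℕ | ∀ x : ℕ, c' ≤ x →
      x ∈ gen (fun i : Fin d => (n ⟨d - 1, by omega⟩ - n i) / g)})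
    (L : ℚ)
    (hL : L = ((n ⟨d - 1, by omega⟩ - n ⟨0, by omega⟩ : ℕ) : ℚ) *
        ((n ⟨d - 1, by omega⟩ - n ⟨1, by omega⟩ : ℕ) : ℚ) *
        (((g : ℚ) * (c : ℚ) +
            (d : ℚ) * ((n ⟨d - 1, by omega⟩ - n ⟨0, by omega⟩ : ℕ) : ℚ)) /
            ((n ⟨d - 1, by omega⟩ - n ⟨d - 2, by omega⟩ : ℕ) : ℚ) + (d : ℚ)) -
        ((n ⟨d - 1, by omega⟩ : ℕ) : ℚ))
    (j : ℕ) (hj : L < (j : ℚ))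
    (s : ℕ) (a a' : Fin d → ℕ)
    (ha : sval (fun i => n i + j) a = s) (ha' : sval (fun i => n i + j) a' = s)
    (hlen : tlen a' < tlen a) :
    ∃ b : Fin d → ℕ, sval (fun i => n i + j) b = s ∧ tlen b = tlen a ∧
      b ⟨0, by omega⟩ ≠ 0 := by
  classical
  set z : Fin d := ⟨0, by omega⟩ with hz
  set o : Fin d := ⟨1, by omega⟩ with ho
  set e : Fin d := ⟨d - 1, by omega⟩ with he
  have hle : ∀ i, n i ≤ n e := fun i => hmono.monotone (by
    rw [Fin.le_def]; simp only [he]; have := i.2; omega)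
  have hze : n z < n e := hmono (by rw [Fin.lt_def]; simp only [he, hz]; omega)
  by_cases h0 : a z = 0
  swap
  · exact ⟨a, ha, rfl, h0⟩
  have hN : (n e - n z) * (n e - n o) * d < n e + j := by
    have hX : (0 : ℚ) ≤ ((g : ℚ) * (c : ℚ) + (d : ℚ) * ((n e - n z : ℕ) : ℚ)) /
        ((n e - n ⟨d - 2, by omega⟩ : ℕ) : ℚ) := by positivity
    have hP : (0 : ℚ) ≤ ((n e - n z : ℕ) : ℚ) * ((n e - n o : ℕ) : ℚ) := by positivity
    have h1 := mul_nonneg hP hX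
    rw [hL, mul_add] at hj
    have : (((n e - n z : ℕ) : ℚ) * ((n e - n o : ℕ) : ℚ) * (d : ℚ)) < (n e : ℚ) + j := by
      linarith
    exact_mod_cast this
  have key : ∀ x : Fin d → ℕ, sval (fun i => n i + j) x + ∑ i, x i * (n e - n i)
      = tlen x * (n e + j) := by
    intro x
    unfold sval tlen
    rw [← Finset.sum_add_distrib, Finset.sum_mul]
    refine Finset.sum_congr rfl fun i _ => ?_
    rw [← mul_add]
    congr 1
    have := hle i
    show n i + j + (n e - n i) = n e + j
    omega
  have hM : n e + j ≤ ∑ i, a i * (n e - n i) := by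
    have k1 := key a
    have k2 := key a'
    rw [ha] at k1
    rw [ha'] at k2
    have : (tlen a' + 1) * (n e + j) ≤ tlen a * (n e + j) := Nat.mul_le_mul_right _ hlen
    rw [add_mul, one_mul] at this
    omega
  obtain ⟨i, hi1, hi2⟩ : ∃ i, n e - n z ≤ a i ∧ n e - n i ≠ 0 := by
    by_contra! hcon
    have hb : ∑ i, a i * (n e - n i) ≤ ∑ i : Fin d, (n e - n z) * (n e - n o) := by
      refine Finset.sum_le_sum fun i _ => ?_
      by_cases hiz : i = z
      · rw [hiz, h0]; simp
      have hoi : n o ≤ n i := hmono.monotone (by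
        rw [Fin.le_def]; simp only [ho]
        have : (i : ℕ) ≠ 0 := fun h => hiz (Fin.ext h)
        omega)
      rcases le_or_gt (n e - n z) (a i) with h | h
      · rw [hcon i h]; simp
      · exact Nat.mul_le_mul h.le (by omega)
    rw [Finset.sum_const, Finset.card_univ, Fintype.card_fin, smul_eq_mul, mul_comm] at hb
    omega
  have hiz : i ≠ z := by
    intro h
    rw [h, h0] at hi1
    omega
  have hzi : n z ≤ n i := hmono.monotone (by rw [Fin.le_def]; simp [hz])
  let b : Fin d → ℕ := fun k => (a k - if k = i then n e - n z else 0) +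
    (if k = z then n e - n i else 0) + (if k = e then n i - n z else 0)
  have hb : ∀ k, b k + (if k = i then n e - n z else 0) = a k +
    (if k = z then n e - n i else 0) + (if k = e then n i - n z else 0) := by
    intro k
    have : (if k = i then n e - n z else 0) ≤ a k := by
      split_ifs with h
      · rw [h]; exact hi1
      · exact Nat.zero_le _
    simp only [b]
    omega
  have hsum : ∀ w : Fin d → ℕ, ∑ k, b k * w k + (n e - n z) * w i =
      ∑ k, a k * w k + (n e - n i) * w z + (n i - n z) * w e := by
    intro w
    have h := Finset.sum_congr (rfl : (Finset.univ : Finset (Fin d)) = Finset.univ)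
      (fun k _ => congrArg (· * w k) (hb k))
    simpa [add_mul, Finset.sum_add_distrib, ite_mul] using h
  have hie := hle i
  refine ⟨b, ?_, ?_, ?_⟩
  · rw [← ha]
    have h := hsum (fun i => n i + j)
    unfold sval
    have h2 : (n e - n z) * (n i + j) = (n e - n i) * (n z + j) + (n i - n z) * (n e + j) := by
      zify [hie, hzi, hze.le]
      ring
    simp only at h ⊢
    omega
  · have h := hsum (fun _ => 1)
    unfold tlen
    simp only [mul_one] at h
    omega
  · simp only [b, if_true]
    omega
end
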